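/- arXiv:2503.05695 — 3 statements merged into one kernel-verified Lean document; each statement's English description precedes it below -/
import Mathlib

section
/- For every fair-division instance with non-negative valuations there exists a well-ordered connected allocation A = (A_1,…,A_n) that is EQ1P_g^c, i.e., v_i^+(A_i) ≥ v_j^-(A_j) holds for all agents i, j. -/
/-!
The proof is an application of Sperner's lemma to the space of cut vectors
`0 ≤ x 0 ≤ ⋯ ≤ x (k - 1) ≤ m`, where `n = k + 1`. A cut vector is the same thing as a well-ordered
connected allocation, agent `i` getting the items between its two cuts.

Suppose that no cut vector is good. Label `x` by an agent `j` such that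
`v_i⁺(A_i) < v_j⁻(A_j)` for some `i`. As valuations are non-negative, `A_j` is nonempty, which is
the boundary condition of Sperner's lemma. Triangulate the cut vectors by Kuhn cells: the vertices
of a cell arise from a cut vector by moving the cuts one step to the right, one after the other.
Sperner's lemma (`sperner`) gives a cell that carries all labels.

Between two vertices of one cell, the two ends of the bundle of agent `i` move right by at most one.
Therefore the ranges `[v_i⁻, v_i⁺]` at the two vertices intersect (`ranges_meet_vtx`): they share the
value of the smaller bundle, or of the intersection of the bundles when both ends move. So the
maximum `p i` of `v_i⁻` over the vertices of the cell lies in all of these ranges. At the vertex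
labelled `i` some agent `j` has `p j ≤ v_j⁺ < v_i⁻ ≤ p i`. Since this holds for every `i`, no `p i` is
minimal, a contradiction.

Sperner's lemma is proved in its parity form by induction on the number of cuts, counting doors, that
is, facets carrying all labels but `0`. In a single cell the number of doors is odd exactly when the
cell is rainbow (`door_parity`). A door is shared by exactly two cells, exchanged by the pivots
`pivot`, `rot` and `unrot`, unless it lies in the face where the first bundle is empty
(`reg_of_door`); the doors in that face are the rainbow cells of one dimension less (`lift`).
-/


/-- A bundle is connected (w.r.t. the path `1, …, m`) if it is an interval
(possibly empty). -/
def IsConnectedBundle (A : Finset ℕ) : Prop := ∃ s t : ℕ, A = Finset.Icc s t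

/-- `A` is an allocation of the items `M = {1, …, m}` to the `n` agents:
pairwise disjoint bundles whose union is `M`. -/
def IsAllocation (m : ℕ) {n : ℕ} (A : Fin n → Finset ℕ) : Prop :=
  (∀ i j : Fin n, i ≠ j → Disjoint (A i) (A j)) ∧
  Finset.univ.biUnion A = Finset.Icc 1 m

/-- `v⁺(A)`: for a nonempty connected bundle `A`, the maximum of `v` over `A`,
`A` minus its smallest element and `A` minus its largest element; `0` on `∅`. -/
def vplus (v : Finset ℕ → ℤ) (A : Finset ℕ) : ℤ :=
  if h : A.Nonempty then
    max (v A) (max (v (A.erase (A.min' h))) (v (A.erase (A.max' h))))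
  else 0

/-- `v⁻(A)`: for a nonempty connected bundle `A`, the minimum of `v` over `A`,
`A` minus its smallest element and `A` minus its largest element; `0` on `∅`. -/
def vminus (v : Finset ℕ → ℤ) (A : Finset ℕ) : ℤ :=
  if h : A.Nonempty then
    min (v A) (min (v (A.erase (A.min' h))) (v (A.erase (A.max' h))))
  else 0

/-- A connected allocation is well-ordered if for agents `i < j` every item of
`A i` is smaller than every item of `A j`. -/
def WellOrdered {n : ℕ} (A : Fin n → Finset ℕ) : Prop :=
  ∀ i j : Fin n, i < j → ∀ a ∈ A i, ∀ b ∈ A j, a < b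

/-! ### Cut vectors and Kuhn cells -/

/-- The cut positions of `x`, completed by the two fixed cuts `0` and `m`. -/
def cuts {k : ℕ} (m : ℕ) (x : Fin k → ℤ) : Fin (k + 2) → ℤ :=
  Fin.cons 0 (Fin.snoc (α := fun _ => ℤ) x (m : ℤ))

/-- The number of items between the two cuts that delimit the bundle of agent `i`. -/
def len {k : ℕ} (m : ℕ) (x : Fin k → ℤ) (i : Fin (k + 1)) : ℤ :=
  cuts m x i.succ - cuts m x i.castSucc

/-- `x` is a cut vector: `0 ≤ x 0 ≤ x 1 ≤ ⋯ ≤ m`. -/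
def Reg {k : ℕ} (m : ℕ) (x : Fin k → ℤ) : Prop := ∀ i, 0 ≤ len m x i

/-- The `s`-th vertex of the Kuhn cell `T = (b, τ)`: it starts at `b`, and the cut `j` moves one
step to the right at time `τ j`. -/
def vtx {k : ℕ} (T : (Fin k → ℤ) × (Fin k → ℕ)) (s : ℕ) : Fin k → ℤ :=
  fun j => T.1 j + if T.2 j < s then 1 else 0

open Classical in
/-- The Kuhn cells all of whose vertices `vtx T 0, …, vtx T k` are cut vectors. The times `T.2` form
a bijection onto `{0, …, k - 1}`. -/
noncomputable def cells (k m : ℕ) : Finset ((Fin k → ℤ) × (Fin k → ℕ)) :=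
  (Fintype.piFinset (fun _ => Finset.Icc 0 (m : ℤ)) ×ˢ
    Fintype.piFinset (fun _ => Finset.range k)).filter
    fun T => Function.Injective T.2 ∧ ∀ s ≤ k, Reg m (vtx T s)

lemma Reg.mono {k m : ℕ} {x : Fin k → ℤ} (h : Reg m x) : Monotone (cuts m x) :=
  Fin.monotone_iff_le_succ.2 fun i => by have := h i; unfold len at this; omega

@[simp] lemma cuts_zero {k m : ℕ} (x : Fin k → ℤ) : cuts m x 0 = 0 := by simp [cuts]

@[simp] lemma cuts_last {k m : ℕ} (x : Fin k → ℤ) : cuts m x (Fin.last _) = m := by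
  rw [cuts, ← Fin.succ_last, Fin.cons_succ, Fin.snoc_last]

@[simp] lemma cuts_succ_castSucc {k m : ℕ} (x : Fin k → ℤ) (j : Fin k) :
    cuts m x j.castSucc.succ = x j := by
  rw [cuts, Fin.cons_succ, Fin.snoc_castSucc]

lemma cuts_cons {k m : ℕ} (x : Fin k → ℤ) :
    cuts m (Fin.cons (α := fun _ => ℤ) 0 x) = Fin.cons (α := fun _ => ℤ) 0 (cuts m x) := by
  unfold cuts
  rw [← Fin.cons_snoc_eq_snoc_cons]

lemma len_cons_zero {k m : ℕ} (x : Fin k → ℤ) :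
    len m (Fin.cons (α := fun _ => ℤ) 0 x) 0 = 0 := by
  rw [len, cuts_cons, Fin.cons_succ]; simp

lemma len_cons_succ {k m : ℕ} (x : Fin k → ℤ) (i : Fin (k + 1)) :
    len m (Fin.cons (α := fun _ => ℤ) 0 x) i.succ = len m x i := by
  rw [len, cuts_cons, Fin.cons_succ, ← Fin.succ_castSucc, Fin.cons_succ]; rfl

lemma reg_cons {k m : ℕ} (x : Fin k → ℤ) :
    Reg m (Fin.cons (α := fun _ => ℤ) 0 x) ↔ Reg m x := by
  constructor
  · intro h i
    have := h i.succ
    rwa [len_cons_succ] at this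
  · intro h i
    refine Fin.cases ?_ (fun i => ?_) i
    · rw [len_cons_zero]
    · rw [len_cons_succ]; exact h i

lemma len_zero {k m : ℕ} (x : Fin (k + 1) → ℤ) : len m x 0 = x 0 := by
  have := cuts_succ_castSucc (m := m) x 0
  rw [len, Fin.castSucc_zero, cuts_zero, sub_zero, ← this]; rfl

lemma Reg.bound {k m : ℕ} {x : Fin k → ℤ} (h : Reg m x) (j : Fin k) : 0 ≤ x j ∧ x j ≤ m := by
  have h1 := h.mono (Fin.zero_le j.castSucc.succ)
  have h2 := h.mono (Fin.le_last j.castSucc.succ)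
  rw [cuts_succ_castSucc] at h1 h2
  rw [cuts_zero] at h1
  rw [cuts_last] at h2
  exact ⟨h1, h2⟩

lemma mem_cells {k m : ℕ} {T : (Fin k → ℤ) × (Fin k → ℕ)} :
    T ∈ cells k m ↔
      Function.Injective T.2 ∧ (∀ j, T.2 j < k) ∧ ∀ s ≤ k, Reg m (vtx T s) := by
  simp only [cells, Finset.mem_filter, Finset.mem_product, Fintype.mem_piFinset,
    Finset.mem_Icc, Finset.mem_range]
  constructor
  · rintro ⟨⟨_, h2⟩, h3, h4⟩
    exact ⟨h3, h2, h4⟩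
  · rintro ⟨h1, h2, h3⟩
    refine ⟨⟨fun j => ?_, h2⟩, h1, h3⟩
    have := (h3 0 (Nat.zero_le _)).bound j
    simpa [vtx] using this

/-- Along a cell every cut moves to the right, by at most one step in total. -/
lemma cuts_vtx_near {k m : ℕ} (T : (Fin k → ℤ) × (Fin k → ℕ)) {s t : ℕ} (h : s ≤ t)
    (i : Fin (k + 2)) :
    cuts m (vtx T s) i ≤ cuts m (vtx T t) i ∧ cuts m (vtx T t) i ≤ cuts m (vtx T s) i + 1 := by
  refine Fin.cases ?_ (fun i => ?_) i
  · simp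
  · refine Fin.lastCases ?_ (fun j => ?_) i
    · rw [Fin.succ_last, cuts_last, cuts_last]; omega
    · rw [cuts_succ_castSucc, cuts_succ_castSucc]
      unfold vtx
      split_ifs <;> omega

lemma len_vtx_near {k m : ℕ} (T : (Fin k → ℤ) × (Fin k → ℕ)) (s t : ℕ) (i : Fin (k + 1)) :
    len m (vtx T s) i ≤ len m (vtx T t) i + 1 := by
  unfold len
  rcases le_total s t with h | h
  · have h1 := cuts_vtx_near (m := m) T h i.succ
    have h2 := cuts_vtx_near (m := m) T h i.castSucc
    omega
  · have h1 := cuts_vtx_near (m := m) T h i.succ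
    have h2 := cuts_vtx_near (m := m) T h i.castSucc
    omega

/-! ### Doors and their parity in one cell -/

/-- The facet of `T` opposite to the vertex `r` is a door: it carries all labels except
possibly `0`. -/
def Door {k : ℕ} (l : (Fin k → ℤ) → Fin (k + 1)) (T : (Fin k → ℤ) × (Fin k → ℕ)) (r : ℕ) : Prop :=
  ∀ c, c ≠ 0 → ∃ s ≤ k, s ≠ r ∧ l (vtx T s) = c

/-- The cell `T` carries all labels. -/
def Rainbow {k : ℕ} (l : (Fin k → ℤ) → Fin (k + 1)) (T : (Fin k → ℤ) × (Fin k → ℕ)) : Prop :=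
  ∀ c, ∃ s ≤ k, l (vtx T s) = c

open Classical in
/-- Sperner's local count: a rainbow cell has exactly one door and any other cell has none or
two. -/
lemma door_parity {k : ℕ} (f : ℕ → Fin (k + 1)) :
    (((Finset.range (k + 1)).filter fun r => ∀ c, c ≠ 0 → ∃ s ≤ k, s ≠ r ∧ f s = c).card : ZMod 2)
      = if ∀ c, ∃ s ≤ k, f s = c then 1 else 0 := by
  split_ifs with hf
  · obtain ⟨r, hr, hr0⟩ := hf 0
    have hinj : Set.InjOn f (Finset.range (k + 1)) := by
      apply Finset.injOn_of_surjOn_of_card_le f (t := Finset.univ)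
      · intro x _; simp
      · intro c _
        obtain ⟨s, hs, h⟩ := hf c
        exact ⟨s, by simpa [Nat.lt_succ_iff] using hs, h⟩
      · simp
    have : ((Finset.range (k + 1)).filter
        fun r => ∀ c, c ≠ 0 → ∃ s ≤ k, s ≠ r ∧ f s = c) = {r} := by
      ext t
      simp only [Finset.mem_filter, Finset.mem_range, Finset.mem_singleton]
      constructor
      · rintro ⟨ht, h⟩
        by_contra hne
        have h0 : f t ≠ 0 := fun h0 => hne (hinj (by simpa using ht) (by simp; omega)
          (h0.trans hr0.symm))
        obtain ⟨s, hs, hst, hs2⟩ := h _ h0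
        exact hst (hinj (by simp; omega) (by simpa using ht) hs2)
      · rintro rfl
        refine ⟨by omega, fun c hc => ?_⟩
        obtain ⟨s, hs, h⟩ := hf c
        exact ⟨s, hs, fun hh => hc (by rw [← h, hh, hr0]), h⟩
    rw [this]; simp
  · rcases Finset.eq_empty_or_nonempty ((Finset.range (k + 1)).filter
        fun r => ∀ c, c ≠ 0 → ∃ s ≤ k, s ≠ r ∧ f s = c) with h | ⟨r, hr⟩
    · rw [h]; simp
    · simp only [Finset.mem_filter, Finset.mem_range] at hr
      obtain ⟨hrk, hr⟩ := hr
      have hf0 : ∀ s ≤ k, f s ≠ 0 := by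
        intro s hs h0
        apply hf
        intro c
        by_cases hc : c = 0
        · exact ⟨s, hs, h0.trans hc.symm⟩
        · obtain ⟨s, hs, _, h⟩ := hr c hc
          exact ⟨s, hs, h⟩
      have hinj : Set.InjOn f ((Finset.range (k + 1)).erase r) := by
        apply Finset.injOn_of_surjOn_of_card_le f (t := Finset.univ.erase 0)
        · intro x hx
          simp only [Finset.coe_erase, Set.mem_sdiff, Finset.mem_coe, Finset.mem_range,
            Set.mem_singleton_iff] at hx
          simpa using hf0 x (by omega)
        · intro c hc
          obtain ⟨s, hs, hsr, h⟩ := hr c (by simpa using hc)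
          exact ⟨s, by simp; omega, h⟩
        · rw [Finset.card_erase_of_mem (by simpa using hrk), Finset.card_erase_of_mem (by simp)]
          simp
      obtain ⟨s, hs, hsr, hfs⟩ := hr (f r) (hf0 r (by omega))
      have : ((Finset.range (k + 1)).filter
          fun r => ∀ c, c ≠ 0 → ∃ s ≤ k, s ≠ r ∧ f s = c) = {r, s} := by
        ext t
        simp only [Finset.mem_filter, Finset.mem_range, Finset.mem_singleton, Finset.mem_insert]
        constructor
        · rintro ⟨ht, h⟩
          by_contra! hne
          obtain ⟨u, hu, hut, h2⟩ := h _ (hf0 t (by omega))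
          by_cases hur : u = r
          · subst hur
            exact hne.2 (hinj (by simp; omega) (by simp; omega) (h2.symm.trans hfs.symm))
          · exact hut (hinj (by simp; omega) (by simp; omega) h2)
        · rintro (rfl | rfl)
          · exact ⟨hrk, hr⟩
          · refine ⟨by omega, fun c hc => ?_⟩
            obtain ⟨u, hu, hur, h⟩ := hr c hc
            by_cases hut : u = t
            · exact ⟨r, by omega, fun h => hsr h.symm, by rw [← h, hut, hfs]⟩
            · exact ⟨u, hu, hut, h⟩
      rw [this, Finset.card_pair (fun h => hsr h.symm)]
      rfl

/-- If the facet of `T` opposite to the vertex `r` is a door made of cut vectors, then the vertex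
`r` is a cut vector too, unless the facet lies in the face where the first bundle is empty. The
length of a bundle changes by at most one within a cell, so a negative length at the vertex `r`
forces that bundle to be empty on the whole facet, which then cannot carry its label. -/
lemma reg_of_door {k m : ℕ} {l : (Fin k → ℤ) → Fin (k + 1)}
    (hl : ∀ x, Reg m x → 0 < len m x (l x)) {T : (Fin k → ℤ) × (Fin k → ℕ)} {r : ℕ}
    (hT : ∀ s ≤ k, s ≠ r → Reg m (vtx T s)) (hd : Door l T r)
    (h0 : 0 ≤ len m (vtx T r) 0 ∨ ∃ s, 0 < len m (vtx T s) 0) : Reg m (vtx T r) := by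
  intro i
  by_cases hi : i = 0
  · subst hi
    rcases h0 with h0 | ⟨s, hs⟩
    · exact h0
    · have := len_vtx_near (m := m) T s r 0
      omega
  · obtain ⟨s, hs, hsr, h⟩ := hd i hi
    have h1 := hl _ (hT s hs hsr)
    rw [h] at h1
    have := len_vtx_near (m := m) T s r i
    omega

/-! ### Pivoting -/

/-- The pivot at the inner vertex `r + 1`: exchange the moves at the times `r` and `r + 1`. -/
def pivot {k : ℕ} (r : ℕ) (T : (Fin k → ℤ) × (Fin k → ℕ)) : (Fin k → ℤ) × (Fin k → ℕ) :=
  (T.1, fun j => if T.2 j = r then r + 1 else if T.2 j = r + 1 then r else T.2 j)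

lemma vtx_pivot {k : ℕ} (r : ℕ) (T : (Fin k → ℤ) × (Fin k → ℕ)) {s : ℕ} (hs : s ≠ r + 1) :
    vtx (pivot r T) s = vtx T s := by
  funext j
  simp only [vtx, pivot]
  split_ifs <;> omega

lemma pivot_pivot {k : ℕ} (r : ℕ) (T : (Fin k → ℤ) × (Fin k → ℕ)) : pivot r (pivot r T) = T := by
  refine Prod.ext rfl (funext fun j => ?_)
  simp only [pivot]
  split_ifs <;> omega

/-- The pivot at the vertex `0`: drop the first vertex and append the last vertex of the cell shifted
along the first move. -/
def rot {k : ℕ} (T : (Fin (k + 1) → ℤ) × (Fin (k + 1) → ℕ)) :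
    (Fin (k + 1) → ℤ) × (Fin (k + 1) → ℕ) :=
  (vtx T 1, fun j => if T.2 j = 0 then k else T.2 j - 1)

/-- The pivot at the last vertex, inverse to `rot`. -/
def unrot {k : ℕ} (T : (Fin (k + 1) → ℤ) × (Fin (k + 1) → ℕ)) :
    (Fin (k + 1) → ℤ) × (Fin (k + 1) → ℕ) :=
  (fun j => T.1 j - if T.2 j = k then 1 else 0, fun j => if T.2 j = k then 0 else T.2 j + 1)

lemma unrot_rot {k : ℕ} {T : (Fin (k + 1) → ℤ) × (Fin (k + 1) → ℕ)} (h : ∀ j, T.2 j < k + 1) :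
    unrot (rot T) = T := by
  refine Prod.ext (funext fun j => ?_) (funext fun j => ?_) <;>
  · have := h j
    simp only [unrot, rot, vtx]
    split_ifs <;> omega

lemma rot_unrot {k : ℕ} {T : (Fin (k + 1) → ℤ) × (Fin (k + 1) → ℕ)} (h : ∀ j, T.2 j < k + 1) :
    rot (unrot T) = T := by
  refine Prod.ext (funext fun j => ?_) (funext fun j => ?_) <;>
  · have := h j
    by_cases hj : T.2 j = k <;> simp [unrot, rot, vtx, hj]

lemma vtx_rot {k : ℕ} {T : (Fin (k + 1) → ℤ) × (Fin (k + 1) → ℕ)} (h : ∀ j, T.2 j < k + 1)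
    {s : ℕ} (hs : s ≤ k) : vtx (rot T) s = vtx T (s + 1) := by
  funext j
  have := h j
  simp only [rot, vtx]
  split_ifs <;> omega

lemma vtx_unrot {k : ℕ} {T : (Fin (k + 1) → ℤ) × (Fin (k + 1) → ℕ)} (h : ∀ j, T.2 j < k + 1)
    {s : ℕ} (hs : s ≤ k) : vtx (unrot T) (s + 1) = vtx T s := by
  funext j
  have := h j
  simp only [unrot, vtx]
  split_ifs <;> omega

lemma exists_time {k : ℕ} {τ : Fin k → ℕ} (hi : Function.Injective τ) (hτ : ∀ j, τ j < k)
    {t : ℕ} (ht : t < k) : ∃ j, τ j = t := by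
  have h : Function.Surjective (fun j => (⟨τ j, hτ j⟩ : Fin k)) :=
    Finite.surjective_of_injective fun a b hab => hi (by simpa using hab)
  obtain ⟨j, hj⟩ := h ⟨t, ht⟩
  exact ⟨j, by simpa using hj⟩

/-- The first cut is positive at the last vertex of a cell. -/
lemma len_zero_last_pos {k m : ℕ} {T : (Fin (k + 1) → ℤ) × (Fin (k + 1) → ℕ)}
    (hT : T ∈ cells (k + 1) m) : 0 < len m (vtx T (k + 1)) 0 := by
  obtain ⟨-, h2, h3⟩ := mem_cells.1 hT
  have h := (h3 0 (by omega)).bound 0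
  have := h2 0
  rw [len_zero]
  simp only [vtx] at h ⊢
  simp at h
  rw [if_pos this]
  omega

section Sperner

variable {k m : ℕ} {l : (Fin (k + 1) → ℤ) → Fin (k + 2)}

lemma pivot_mem (hl : ∀ x, Reg m x → 0 < len m x (l x)) {r : ℕ} (hr : r < k)
    {T : (Fin (k + 1) → ℤ) × (Fin (k + 1) → ℕ)} (hT : T ∈ cells (k + 1) m)
    (hd : Door l T (r + 1)) : pivot r T ∈ cells (k + 1) m ∧ Door l (pivot r T) (r + 1) := by
  obtain ⟨h1, h2, h3⟩ := mem_cells.1 hT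
  have hd' : Door l (pivot r T) (r + 1) := by
    intro c hc
    obtain ⟨s, hs, hsr, h⟩ := hd c hc
    exact ⟨s, hs, hsr, by rw [vtx_pivot r T hsr, h]⟩
  have hfac : ∀ s ≤ k + 1, s ≠ r + 1 → Reg m (vtx (pivot r T) s) := fun s hs hsr => by
    rw [vtx_pivot r T hsr]; exact h3 s hs
  refine ⟨mem_cells.2 ⟨fun a b hab => h1 ?_, fun j => ?_, fun s hs => ?_⟩, hd'⟩
  · simp only [pivot] at hab
    split_ifs at hab <;> omega
  · have := h2 j
    simp only [pivot]
    split_ifs <;> omega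
  · by_cases hsr : s = r + 1
    · subst hsr
      refine reg_of_door hl hfac hd' (Or.inr ⟨k + 1, ?_⟩)
      rw [vtx_pivot r T (by omega)]
      exact len_zero_last_pos hT
    · exact hfac s hs hsr

lemma pivot_ne {r : ℕ} (hr : r < k)
    {T : (Fin (k + 1) → ℤ) × (Fin (k + 1) → ℕ)} (hT : T ∈ cells (k + 1) m) : pivot r T ≠ T := by
  obtain ⟨h1, h2, -⟩ := mem_cells.1 hT
  obtain ⟨j, hj⟩ := exists_time h1 h2 (show r < k + 1 by omega)
  intro h
  have := congrFun (congrArg Prod.snd h) j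
  simp [pivot, hj] at this

/-- The facet of `T` opposite to its last vertex lies in the face where the first cut is `0`. -/
def Bdry (T : (Fin (k + 1) → ℤ) × (Fin (k + 1) → ℕ)) : Prop := T.1 0 = 0 ∧ T.2 0 = k

lemma rot_mem (hl : ∀ x, Reg m x → 0 < len m x (l x))
    {T : (Fin (k + 1) → ℤ) × (Fin (k + 1) → ℕ)} (hT : T ∈ cells (k + 1) m) (hd : Door l T 0) :
    rot T ∈ cells (k + 1) m ∧ Door l (rot T) (k + 1) ∧ ¬ Bdry (rot T) := by
  obtain ⟨h1, h2, h3⟩ := mem_cells.1 hT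
  have hd' : Door l (rot T) (k + 1) := by
    intro c hc
    obtain ⟨s, hs, hsr, h⟩ := hd c hc
    obtain ⟨s, rfl⟩ := Nat.exists_eq_succ_of_ne_zero hsr
    exact ⟨s, by omega, by omega, by rw [vtx_rot h2 (by omega), ← h]⟩
  have hfac : ∀ s ≤ k + 1, s ≠ k + 1 → Reg m (vtx (rot T) s) := fun s hs hsr => by
    rw [vtx_rot h2 (by omega)]; exact h3 _ (by omega)
  refine ⟨mem_cells.2 ⟨fun a b hab => h1 ?_, fun j => ?_, fun s hs => ?_⟩, hd', ?_⟩
  · have := h2 a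
    have := h2 b
    simp only [rot] at hab
    split_ifs at hab <;> omega
  · have := h2 j
    simp only [rot]
    split_ifs <;> omega
  · by_cases hsr : s = k + 1
    · subst hsr
      refine reg_of_door hl hfac hd' (Or.inr ⟨k, ?_⟩)
      rw [vtx_rot h2 le_rfl]
      exact len_zero_last_pos hT
    · exact hfac s hs hsr
  · rintro ⟨hb, ht⟩
    have h := (h3 0 (by omega)).bound 0
    have := h2 0
    simp only [rot, vtx] at h hb ht
    split_ifs at h hb ht <;> omega

lemma unrot_mem (hl : ∀ x, Reg m x → 0 < len m x (l x))
    {T : (Fin (k + 1) → ℤ) × (Fin (k + 1) → ℕ)} (hT : T ∈ cells (k + 1) m)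
    (hd : Door l T (k + 1)) (hb : ¬ Bdry T) :
    unrot T ∈ cells (k + 1) m ∧ Door l (unrot T) 0 := by
  obtain ⟨h1, h2, h3⟩ := mem_cells.1 hT
  have hd' : Door l (unrot T) 0 := by
    intro c hc
    obtain ⟨s, hs, hsr, h⟩ := hd c hc
    exact ⟨s + 1, by omega, by omega, by rw [vtx_unrot h2 (by omega), ← h]⟩
  have hfac : ∀ s ≤ k + 1, s ≠ 0 → Reg m (vtx (unrot T) s) := fun s hs hsr => by
    obtain ⟨s, rfl⟩ := Nat.exists_eq_succ_of_ne_zero hsr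
    rw [Nat.succ_eq_add_one, vtx_unrot h2 (by omega)]; exact h3 _ (by omega)
  refine ⟨mem_cells.2 ⟨fun a b hab => h1 ?_, fun j => ?_, fun s hs => ?_⟩, hd'⟩
  · simp only [unrot] at hab
    split_ifs at hab <;> omega
  · have := h2 j
    simp only [unrot]
    split_ifs <;> omega
  · by_cases hsr : s = 0
    · subst hsr
      refine reg_of_door hl hfac hd' (Or.inl ?_)
      have h := (h3 0 (by omega)).bound 0
      rw [len_zero]
      unfold Bdry at hb
      simp only [vtx, unrot] at h ⊢
      simp at h ⊢
      split_ifs <;> omega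
    · exact hfac s hs hsr

/-- A cell in one dimension less, embedded as the facet opposite to the last vertex of a cell
with `Bdry`. -/
def lift (T : (Fin k → ℤ) × (Fin k → ℕ)) : (Fin (k + 1) → ℤ) × (Fin (k + 1) → ℕ) :=
  (Fin.cons (α := fun _ => ℤ) 0 T.1, Fin.cons (α := fun _ => ℕ) k T.2)

lemma vtx_lift (T : (Fin k → ℤ) × (Fin k → ℕ)) {s : ℕ} (hs : s ≤ k) :
    vtx (lift T) s = Fin.cons (α := fun _ => ℤ) 0 (vtx T s) := by
  funext j
  refine Fin.cases ?_ (fun j => ?_) j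
  · simp [vtx, lift, hs]
  · simp [vtx, lift]

/-- The labelling induced by `l` on the face where the first bundle is empty. -/
def face (l : (Fin (k + 1) → ℤ) → Fin (k + 2)) (x : Fin k → ℤ) : Fin (k + 1) :=
  if h : l (Fin.cons (α := fun _ => ℤ) 0 x) = 0 then 0
  else (l (Fin.cons (α := fun _ => ℤ) 0 x)).pred h

lemma succ_face (hl : ∀ x, Reg m x → 0 < len m x (l x)) {x : Fin k → ℤ} (hx : Reg m x) :
    (face l x).succ = l (Fin.cons (α := fun _ => ℤ) 0 x) := by
  have h : l (Fin.cons (α := fun _ => ℤ) 0 x) ≠ 0 := by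
    intro h
    have := hl _ ((reg_cons x).2 hx)
    rw [h, len_cons_zero] at this
    omega
  rw [face, dif_neg h, Fin.succ_pred]

lemma face_label (hl : ∀ x, Reg m x → 0 < len m x (l x)) (x : Fin k → ℤ) (hx : Reg m x) :
    0 < len m x (face l x) := by
  have := hl _ ((reg_cons x).2 hx)
  rwa [← succ_face hl hx, len_cons_succ] at this

lemma lift_mem (hl : ∀ x, Reg m x → 0 < len m x (l x)) {T : (Fin k → ℤ) × (Fin k → ℕ)}
    (hT : T ∈ cells k m) (hd : Rainbow (face l) T) :
    lift T ∈ cells (k + 1) m ∧ Door l (lift T) (k + 1) := by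
  obtain ⟨h1, h2, h3⟩ := mem_cells.1 hT
  have hd' : Door l (lift T) (k + 1) := by
    intro c hc
    obtain ⟨c, rfl⟩ := Fin.exists_succ_eq_of_ne_zero hc
    obtain ⟨s, hs, h⟩ := hd c
    exact ⟨s, by omega, by omega, by rw [vtx_lift T hs, ← succ_face hl (h3 s hs), h]⟩
  have hfac : ∀ s ≤ k + 1, s ≠ k + 1 → Reg m (vtx (lift T) s) := fun s hs hsr => by
    rw [vtx_lift T (by omega), reg_cons]
    exact h3 s (by omega)
  refine ⟨mem_cells.2 ⟨?_, fun j => ?_, fun s hs => ?_⟩, hd'⟩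
  · refine Fin.cons_injective_iff.2 ⟨?_, h1⟩
    rintro ⟨j, hj⟩
    have := h2 j
    omega
  · refine Fin.cases ?_ (fun j => ?_) j
    · simp [lift]
    · have := h2 j
      simp [lift]; omega
  · by_cases hsr : s = k + 1
    · subst hsr
      refine reg_of_door hl hfac hd' (Or.inl ?_)
      rw [len_zero]
      simp [vtx, lift]
    · exact hfac s hs hsr

lemma exists_lift (hl : ∀ x, Reg m x → 0 < len m x (l x))
    {T : (Fin (k + 1) → ℤ) × (Fin (k + 1) → ℕ)} (hT : T ∈ cells (k + 1) m)
    (hd : Door l T (k + 1)) (hb : Bdry T) :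
    ∃ T' ∈ cells k m, Rainbow (face l) T' ∧ lift T' = T := by
  obtain ⟨h1, h2, h3⟩ := mem_cells.1 hT
  have hlift : lift (Fin.tail T.1, Fin.tail T.2) = T := by
    refine Prod.ext ?_ ?_
    · have h := Fin.cons_self_tail T.1
      rwa [hb.1] at h
    · have h := Fin.cons_self_tail T.2
      rwa [hb.2] at h
  have hreg : ∀ s ≤ k, Reg m (vtx (Fin.tail T.1, Fin.tail T.2) s) := fun s hs => by
    rw [← reg_cons, ← vtx_lift _ hs, hlift]
    exact h3 s (by omega)
  refine ⟨(Fin.tail T.1, Fin.tail T.2), mem_cells.2 ⟨?_, fun j => ?_, hreg⟩, fun c => ?_, hlift⟩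
  · exact fun a b hab => Fin.succ_injective _ (h1 hab)
  · have h4 := h2 j.succ
    have h5 : T.2 j.succ ≠ k := fun h => Fin.succ_ne_zero j (h1 (h.trans hb.2.symm))
    simp only [Fin.tail]
    omega
  · obtain ⟨s, hs, hsr, h⟩ := hd c.succ (Fin.succ_ne_zero c)
    refine ⟨s, by omega, Fin.succ_injective _ ?_⟩
    rw [succ_face hl (hreg s (by omega)), ← vtx_lift _ (by omega), hlift, h]

end Sperner

open Classical in
/-- **Sperner's lemma** for the Kuhn triangulation of the cut vectors, in its parity form. -/
theorem sperner (m : ℕ) : ∀ (k : ℕ) (l : (Fin k → ℤ) → Fin (k + 1)),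
    (∀ x, Reg m x → 0 < len m x (l x)) →
      (((cells k m).filter (Rainbow l)).card : ZMod 2) = 1 := by
  intro k
  induction k with
  | zero =>
    intro l hl
    have : (cells 0 m).filter (Rainbow l) = {(Fin.elim0, Fin.elim0)} := by
      ext T
      simp only [Finset.mem_filter, Finset.mem_singleton, mem_cells]
      constructor
      · intro _
        exact Subsingleton.elim _ _
      · intro _
        refine ⟨⟨Function.injective_of_subsingleton _, fun j => j.elim0, fun s _ i => ?_⟩,
          fun c => ⟨0, le_rfl, Subsingleton.elim (α := Fin 1) _ _⟩⟩
        obtain rfl : i = 0 := Subsingleton.elim (α := Fin 1) _ _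
        have h := cuts_last (m := m) (vtx T s)
        rw [len, Fin.castSucc_zero, cuts_zero, sub_zero]
        exact (Nat.cast_nonneg m).trans h.ge
    rw [this]; simp
  | succ k ih =>
    intro l hl
    -- Count the pairs of a cell and a door of it, first by cells, then by the missing vertex.
    have h1 : (((cells (k + 1) m).filter (Rainbow l)).card : ZMod 2) =
        ∑ r ∈ Finset.range (k + 2), (((cells (k + 1) m).filter (Door l · r)).card : ZMod 2) := by
      rw [Finset.card_filter, Nat.cast_sum]
      simp only [Finset.card_filter, Nat.cast_sum]
      rw [Finset.sum_comm]
      refine Finset.sum_congr rfl fun T _ => ?_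
      have := door_parity (fun s => l (vtx T s))
      rw [Finset.card_filter, Nat.cast_sum] at this
      unfold Door Rainbow
      rw [Nat.cast_ite, Nat.cast_one, Nat.cast_zero]
      convert this.symm
    have hmid : ∀ r ∈ Finset.range k,
        (((cells (k + 1) m).filter (Door l · (r + 1))).card : ZMod 2) = 0 := by
      intro r hr
      rw [Finset.mem_range] at hr
      rw [Finset.card_eq_sum_ones, Nat.cast_sum]
      refine Finset.sum_involution (fun T _ => pivot r T) ?_ ?_ ?_ ?_
      · intro _ _; decide
      · intro T hT _
        exact pivot_ne hr (Finset.mem_filter.1 hT).1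
      · intro T hT
        rw [Finset.mem_filter] at hT ⊢
        exact pivot_mem hl hr hT.1 hT.2
      · intro T _
        exact pivot_pivot r T
    have hrot : ((cells (k + 1) m).filter (Door l · 0)).card =
        (((cells (k + 1) m).filter (Door l · (k + 1))).filter (fun T => ¬ Bdry T)).card := by
      refine Finset.card_nbij' rot unrot ?_ ?_ ?_ ?_
      · intro T hT
        simp only [Finset.coe_filter, Finset.mem_filter, Set.mem_ofPred_eq] at hT ⊢
        have := rot_mem hl hT.1 hT.2
        tauto
      · intro T hT
        simp only [Finset.coe_filter, Finset.mem_filter, Set.mem_ofPred_eq] at hT ⊢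
        exact unrot_mem hl hT.1.1 hT.1.2 hT.2
      · intro T hT
        simp only [Finset.coe_filter, Set.mem_ofPred_eq] at hT
        exact unrot_rot (mem_cells.1 hT.1).2.1
      · intro T hT
        simp only [Finset.coe_filter, Finset.mem_filter, Set.mem_ofPred_eq] at hT
        exact rot_unrot (mem_cells.1 hT.1.1).2.1
    have hbd : ((cells k m).filter (Rainbow (face l))).card =
        (((cells (k + 1) m).filter (Door l · (k + 1))).filter Bdry).card := by
      refine Finset.card_bij (fun T _ => lift T) ?_ ?_ ?_
      · intro T hT
        simp only [Finset.mem_filter] at hT ⊢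
        refine ⟨lift_mem hl hT.1 hT.2, ?_, ?_⟩ <;> simp [lift]
      · intro T _ T' _ h
        simp only [lift, Prod.mk.injEq, Fin.cons_inj] at h
        exact Prod.ext h.1.2 h.2.2
      · intro T hT
        simp only [Finset.mem_filter] at hT
        obtain ⟨T', h1, h2, h3⟩ := exists_lift hl hT.1.1 hT.1.2 hT.2
        exact ⟨T', Finset.mem_filter.2 ⟨h1, h2⟩, h3⟩
    rw [h1, Finset.sum_range_succ, Finset.sum_range_succ', Finset.sum_eq_zero hmid, hrot,
      ← Finset.card_filter_add_card_filter_not (s := (cells (k + 1) m).filter (Door l · (k + 1)))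
        Bdry, ← hbd, Nat.cast_add, ih _ (face_label hl)]
    have h2 : ∀ a : ZMod 2, 0 + a + (1 + a) = 1 := by decide
    exact h2 _

/-! ### Bundles of adjacent cut vectors -/

/-- The bundle of agent `i`: the items between its two cuts. -/
def bundle {k : ℕ} (m : ℕ) (x : Fin k → ℤ) (i : Fin (k + 1)) : Finset ℕ :=
  Finset.Icc ((cuts m x i.castSucc).toNat + 1) (cuts m x i.succ).toNat

lemma erase_min_Icc {a c : ℕ} (h : (Finset.Icc (a + 1) c).Nonempty) :
    (Finset.Icc (a + 1) c).erase ((Finset.Icc (a + 1) c).min' h) = Finset.Icc (a + 1 + 1) c := by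
  have hac := Finset.nonempty_Icc.1 h
  have : (Finset.Icc (a + 1) c).min' h = a + 1 :=
    (Finset.min'_eq_iff _ h _).2 ⟨by simpa using hac, fun b hb => (Finset.mem_Icc.1 hb).1⟩
  rw [this]
  ext t; simp only [Finset.mem_erase, Finset.mem_Icc]; omega

lemma erase_max_Icc {a c : ℕ} (h : (Finset.Icc (a + 1) (c + 1)).Nonempty) :
    (Finset.Icc (a + 1) (c + 1)).erase ((Finset.Icc (a + 1) (c + 1)).max' h) =
      Finset.Icc (a + 1) c := by
  have hac := Finset.nonempty_Icc.1 h
  have : (Finset.Icc (a + 1) (c + 1)).max' h = c + 1 :=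
    (Finset.max'_eq_iff _ h _).2 ⟨by simpa using hac, fun b hb => (Finset.mem_Icc.1 hb).2⟩
  rw [this]
  ext t; simp only [Finset.mem_erase, Finset.mem_Icc]; omega

lemma mem_range_self {v : Finset ℕ → ℤ} (hv : v ∅ = 0) (S : Finset ℕ) :
    vminus v S ≤ v S ∧ v S ≤ vplus v S := by
  unfold vminus vplus
  split_ifs with h
  · simp
  · rw [Finset.not_nonempty_iff_eq_empty.1 h, hv]; simp

lemma mem_range_min {v : Finset ℕ → ℤ} {a c : ℕ} (h : a < c) :
    vminus v (Finset.Icc (a + 1) c) ≤ v (Finset.Icc (a + 1 + 1) c) ∧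
      v (Finset.Icc (a + 1 + 1) c) ≤ vplus v (Finset.Icc (a + 1) c) := by
  have hne : (Finset.Icc (a + 1) c).Nonempty := Finset.nonempty_Icc.2 h
  rw [vminus, vplus, dif_pos hne, dif_pos hne, erase_min_Icc hne]
  simp

lemma mem_range_max {v : Finset ℕ → ℤ} {a c : ℕ} (h : a ≤ c) :
    vminus v (Finset.Icc (a + 1) (c + 1)) ≤ v (Finset.Icc (a + 1) c) ∧
      v (Finset.Icc (a + 1) c) ≤ vplus v (Finset.Icc (a + 1) (c + 1)) := by
  have hne : (Finset.Icc (a + 1) (c + 1)).Nonempty := Finset.nonempty_Icc.2 (by omega)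
  rw [vminus, vplus, dif_pos hne, dif_pos hne, erase_max_Icc hne]
  simp

/-- If both ends of an interval move to the right by at most one, the ranges `[v⁻, v⁺]` of the two
bundles intersect. When both ends move, the common value is that of the intersection of the two
bundles. -/
lemma ranges_meet {v : Finset ℕ → ℤ} (hv : v ∅ = 0) {a c a' c' : ℕ} (hac : a ≤ c)
    (hac' : a' ≤ c') (ha : a ≤ a' ∧ a' ≤ a + 1) (hc : c ≤ c' ∧ c' ≤ c + 1) :
    vminus v (Finset.Icc (a + 1) c) ≤ vplus v (Finset.Icc (a' + 1) c') ∧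
      vminus v (Finset.Icc (a' + 1) c') ≤ vplus v (Finset.Icc (a + 1) c) := by
  suffices ∃ t, (vminus v (Finset.Icc (a + 1) c) ≤ t ∧ t ≤ vplus v (Finset.Icc (a + 1) c)) ∧
      (vminus v (Finset.Icc (a' + 1) c') ≤ t ∧ t ≤ vplus v (Finset.Icc (a' + 1) c')) by
    obtain ⟨t, h1, h2⟩ := this
    exact ⟨h1.1.trans h2.2, h2.1.trans h1.2⟩
  obtain rfl | rfl : a' = a ∨ a' = a + 1 := by omega
  · obtain rfl | rfl : c' = c ∨ c' = c + 1 := by omega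
    · exact ⟨_, mem_range_self hv _, mem_range_self hv _⟩
    · exact ⟨_, mem_range_self hv _, mem_range_max hac⟩
  · obtain rfl | rfl : c' = c ∨ c' = c + 1 := by omega
    · exact ⟨_, mem_range_min hac', mem_range_self hv _⟩
    · rcases hac.eq_or_lt with rfl | hlt
      · rw [Finset.Icc_eq_empty (a := a + 1) (by omega),
          Finset.Icc_eq_empty (a := a + 1 + 1) (by omega)]
        exact ⟨_, mem_range_self hv _, mem_range_self hv _⟩
      · exact ⟨_, mem_range_min hlt, mem_range_max hlt⟩

lemma ranges_meet_vtx {k m : ℕ} {v : Finset ℕ → ℤ} (hv : v ∅ = 0)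
    {T : (Fin k → ℤ) × (Fin k → ℕ)} (hT : T ∈ cells k m) {s t : ℕ} (hs : s ≤ k) (ht : t ≤ k)
    (i : Fin (k + 1)) :
    vminus v (bundle m (vtx T s) i) ≤ vplus v (bundle m (vtx T t) i) := by
  obtain ⟨-, -, h3⟩ := mem_cells.1 hT
  have hs1 := (h3 s hs).mono i.castSucc_le_succ
  have ht1 := (h3 t ht).mono i.castSucc_le_succ
  have hs0 := (h3 s hs).mono (Fin.zero_le i.castSucc)
  have ht0 := (h3 t ht).mono (Fin.zero_le i.castSucc)
  rw [cuts_zero] at hs0 ht0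
  unfold bundle
  rcases le_total s t with h | h
  · have h1 := cuts_vtx_near (m := m) T h i.succ
    have h2 := cuts_vtx_near (m := m) T h i.castSucc
    exact (ranges_meet hv (by omega) (by omega) (by omega) (by omega)).1
  · have h1 := cuts_vtx_near (m := m) T h i.succ
    have h2 := cuts_vtx_near (m := m) T h i.castSucc
    exact (ranges_meet hv (by omega) (by omega) (by omega) (by omega)).2

lemma vminus_nonneg {m : ℕ} {v : Finset ℕ → ℤ} (hv : ∀ S ⊆ Finset.Icc 1 m, 0 ≤ v S)
    {S : Finset ℕ} (hS : S ⊆ Finset.Icc 1 m) : 0 ≤ vminus v S := by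
  unfold vminus
  split_ifs with h
  · exact le_min (hv _ hS) (le_min (hv _ ((Finset.erase_subset _ _).trans hS))
      (hv _ ((Finset.erase_subset _ _).trans hS)))
  · exact le_rfl

lemma bundle_subset {k m : ℕ} {x : Fin k → ℤ} (hx : Reg m x) (i : Fin (k + 1)) :
    bundle m x i ⊆ Finset.Icc 1 m := by
  have h := hx.mono (Fin.le_last i.succ)
  rw [cuts_last] at h
  exact Finset.Icc_subset_Icc (by omega) (by omega)

lemma bundle_wellOrdered {k m : ℕ} {x : Fin k → ℤ} (hx : Reg m x) : WellOrdered (bundle m x) := by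
  intro i j hij a ha b hb
  have h := hx.mono (show i.succ ≤ j.castSucc from hij)
  simp only [bundle, Finset.mem_Icc] at ha hb
  omega

lemma bundle_isAllocation {k m : ℕ} {x : Fin k → ℤ} (hx : Reg m x) :
    IsAllocation m (bundle m x) := by
  refine ⟨fun i j hij => Finset.disjoint_left.2 fun a ha hb => ?_, ?_⟩
  · rcases lt_or_gt_of_ne hij with h | h
    · exact lt_irrefl _ (bundle_wellOrdered hx i j h a ha a hb)
    · exact lt_irrefl _ (bundle_wellOrdered hx j i h a hb a ha)
  · refine Finset.Subset.antisymm (Finset.biUnion_subset.2 fun i _ => bundle_subset hx i) ?_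
    intro a ha
    by_contra hno
    simp only [Finset.mem_biUnion, Finset.mem_univ, true_and, not_exists] at hno
    rw [Finset.mem_Icc] at ha
    have key : ∀ i : Fin (k + 2), cuts m x i < a := by
      intro i
      induction i using Fin.induction with
      | zero => rw [cuts_zero]; omega
      | succ i ih =>
        have := hno i
        simp only [bundle, Finset.mem_Icc] at this
        omega
    have := key (Fin.last _)
    rw [cuts_last] at this
    omega

/-! ### The existence theorem -/

/-- For every instance with non-negative valuations there is a well-ordered
connected allocation that is `EQ1P_g^c`: `v_i⁺(A_i) ≥ v_j⁻(A_j)` for all `i, j`. -/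
theorem eq1pgc_exists_nonneg (n m : ℕ) (hn : 0 < n) (v : Fin n → Finset ℕ → ℤ)
    (hv0 : ∀ i, v i ∅ = 0)
    (hnonneg : ∀ i : Fin n, ∀ S ⊆ Finset.Icc 1 m, 0 ≤ v i S) :
    ∃ A : Fin n → Finset ℕ,
      IsAllocation m A ∧ (∀ i, IsConnectedBundle (A i)) ∧ WellOrdered A ∧
      ∀ i j : Fin n, vminus (v j) (A j) ≤ vplus (v i) (A i) := by
  classical
  obtain ⟨k, rfl⟩ : ∃ k, n = k + 1 := ⟨n - 1, by omega⟩
  by_contra hcon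
  have hbad : ∀ x : Fin k → ℤ, Reg m x → ∃ j i,
      vplus (v i) (bundle m x i) < vminus (v j) (bundle m x j) := by
    intro x hx
    by_contra! h
    exact hcon ⟨bundle m x, bundle_isAllocation hx, fun i => ⟨_, _, rfl⟩, bundle_wellOrdered hx,
      fun i j => h j i⟩
  choose! l hl using hbad
  have hlab : ∀ x, Reg m x → 0 < len m x (l x) := by
    intro x hx
    by_contra hle
    have hle' := hx (l x)
    obtain ⟨i, hi⟩ := hl x hx
    have hemp : bundle m x (l x) = ∅ := by
      unfold len at hle hle'
      exact Finset.Icc_eq_empty (by omega)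
    have h1 := vminus_nonneg (hnonneg i) (bundle_subset hx i)
    have h2 := mem_range_self (hv0 i) (bundle m x i)
    rw [hemp] at hi
    simp only [vminus, Finset.not_nonempty_empty, dite_false] at hi
    omega
  have hodd := sperner m k l hlab
  obtain ⟨T, hT⟩ : ((cells k m).filter (Rainbow l)).Nonempty := by
    rw [Finset.nonempty_iff_ne_empty]
    intro h
    rw [h] at hodd
    simp at hodd
  rw [Finset.mem_filter] at hT
  obtain ⟨hT, hrain⟩ := hT
  have hreg := (mem_cells.1 hT).2.2
  -- By `ranges_meet_vtx`, `p i` lies in the range `[v⁻, v⁺]` of agent `i` at every vertex.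
  have hne : (Finset.range (k + 1)).Nonempty := ⟨0, by simp⟩
  let p : Fin (k + 1) → ℤ := fun i =>
    (Finset.range (k + 1)).sup' hne fun s => vminus (v i) (bundle m (vtx T s) i)
  obtain ⟨i, -, hi⟩ := Finset.exists_min_image Finset.univ p ⟨0, Finset.mem_univ _⟩
  obtain ⟨s, hs, hsi⟩ := hrain i
  obtain ⟨j, hj⟩ := hl _ (hreg s hs)
  rw [hsi] at hj
  have h1 : vminus (v i) (bundle m (vtx T s) i) ≤ p i :=
    Finset.le_sup' (fun s => vminus (v i) (bundle m (vtx T s) i)) (by simp; omega)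
  have h2 : p j ≤ vplus (v j) (bundle m (vtx T s) j) :=
    Finset.sup'_le _ _ fun t ht =>
      ranges_meet_vtx (hv0 j) hT (by simp at ht; omega) hs j
  have h3 := hi j (Finset.mem_univ _)
  omega
end

section
/- For every fair-division instance with non-positive valuations there exists a connected allocation A = (A_1,…,A_n) that is EQ1P_g^c, i.e., v_i^+(A_i) ≥ v_j^-(A_j) holds for all agents i, j. -/
namespace EQ1P

/-! ### The alternating product of the indicator matrices -/

/-- The indicator of a set of triples `(k, a, b)`; such a triple stands for giving the bundle
`{a+1, …, b}` to agent `k`. -/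
def chi (T : Finset (ℕ × ℕ × ℕ)) (k a b : ℕ) : ℤ := if (k, a, b) ∈ T then 1 else 0

/-- The vector `D χ_{k-1} D χ_{k-2} ⋯ D χ_0 e_m`, with `(D u)(a) = u(a) - u(a+1)`. -/
def row (m : ℕ) (T : Finset (ℕ × ℕ × ℕ)) : ℕ → ℕ → ℤ
  | 0, b => if b = m then 1 else 0
  | k + 1, a => ∑ b ∈ Finset.range (m + 1), (chi T k a b - chi T k (a + 1) b) * row m T k b

/-- The vector `χ_k D χ_{k-1} D ⋯ D χ_0 e_m`. -/
def cnt (m : ℕ) (T : Finset (ℕ × ℕ × ℕ)) (k a : ℕ) : ℤ :=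
  ∑ b ∈ Finset.range (m + 1), chi T k a b * row m T k b

lemma row_succ (m : ℕ) (T : Finset (ℕ × ℕ × ℕ)) (k a : ℕ) :
    row m T (k + 1) a = cnt m T k a - cnt m T k (a + 1) := by
  simp only [row, cnt, sub_mul, Finset.sum_sub_distrib]

lemma sum_by_parts (f g : ℕ → ℤ) (hf : f 0 = 0) (M : ℕ) (hg : g M = 0) :
    ∑ b ∈ Finset.range M, f b * (g b - g (b + 1)) =
      ∑ b ∈ Finset.range M, (f b - f (b - 1)) * g b := by
  have key : ∀ K, ∑ b ∈ Finset.range K, f b * (g b - g (b + 1)) =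
      ∑ b ∈ Finset.range K, (f b - f (b - 1)) * g b - f (K - 1) * g K := by
    intro K
    induction K with
    | zero => simp [hf]
    | succ K ih =>
      rw [Finset.sum_range_succ, Finset.sum_range_succ, ih]
      simp only [Nat.add_sub_cancel]
      ring
  rw [key, hg]; ring

/-- The set of all triples that encode a nonempty bundle of one of the `n` agents. -/
def full (n m : ℕ) : Finset (ℕ × ℕ × ℕ) :=
  (Finset.range n ×ˢ Finset.range (m + 1) ×ˢ Finset.range (m + 1)).filter
    fun t => t.2.1 < t.2.2

lemma mem_full {n m k a b : ℕ} : (k, a, b) ∈ full n m ↔ k < n ∧ a < b ∧ b ≤ m := by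
  simp only [full, Finset.mem_filter, Finset.mem_product, Finset.mem_range]
  omega

lemma row_full (n m k : ℕ) (hk : k ≤ n) (a : ℕ) :
    row m (full n m) k a = if a + k = m then 1 else 0 := by
  induction k generalizing a with
  | zero => simp [row]
  | succ k ih =>
    have h1 : ∀ b ∈ Finset.range (m + 1),
        (chi (full n m) k a b - chi (full n m) k (a + 1) b) * row m (full n m) k b =
          if b = a + 1 then (if a + (k + 1) = m then 1 else 0) else 0 := by
      intro b hb
      rw [ih (by omega)]
      simp only [Finset.mem_range] at hb
      simp only [chi, mem_full]
      split_ifs <;> omega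
    rw [row, Finset.sum_congr rfl h1, Finset.sum_ite_eq']
    simp only [Finset.mem_range]
    split_ifs <;> omega

lemma cnt_full (n m : ℕ) (h : n + 1 ≤ m) : cnt m (full (n + 1) m) n 0 = 1 := by
  have h1 : ∀ b ∈ Finset.range (m + 1),
      chi (full (n + 1) m) n 0 b * row m (full (n + 1) m) n b = if b = m - n then 1 else 0 := by
    intro b hb
    rw [row_full _ _ _ (by omega)]
    simp only [Finset.mem_range] at hb
    simp only [chi, mem_full]
    split_ifs <;> omega
  rw [cnt, Finset.sum_congr rfl h1, Finset.sum_ite_eq']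
  simp only [Finset.mem_range]
  split_ifs <;> omega

/-! ### The critical level -/

/-- The value of the bundle encoded by a triple. -/
def val (V : ℕ → Finset ℕ → ℤ) (t : ℕ × ℕ × ℕ) : ℤ := V t.1 (Finset.Icc (t.2.1 + 1) t.2.2)

/-- When the triples are inserted in increasing order of value, there is a moment at which
`cnt` changes: `T` is the set of triples present just after the insertion of `t`. -/
lemma exists_critical (m : ℕ) (V : ℕ → Finset ℕ → ℤ) (F : Finset (ℕ × ℕ × ℕ)) (k : ℕ)
    (T : Finset (ℕ × ℕ × ℕ)) (hTF : T ⊆ F)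
    (hlow : ∀ t ∈ T, ∀ s ∈ F, val V s < val V t → s ∈ T) (hT : cnt m T k 0 ≠ 0) :
    ∃ T ⊆ F, ∃ t ∈ T, (∀ s ∈ T, val V s ≤ val V t) ∧ (∀ s ∈ F, val V s < val V t → s ∈ T) ∧
      cnt m T k 0 ≠ cnt m (T.erase t) k 0 := by
  induction T using Finset.strongInduction with
  | H T ih =>
    have hne : T.Nonempty := by
      rw [Finset.nonempty_iff_ne_empty]
      rintro rfl
      simp [cnt, chi] at hT
    obtain ⟨t, ht, hmax⟩ := Finset.exists_max_image T (val V) hne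
    by_cases h : cnt m (T.erase t) k 0 = 0
    · exact ⟨T, hTF, t, ht, hmax, hlow t ht, by rwa [h]⟩
    · refine ih _ (Finset.erase_ssubset ht) ((Finset.erase_subset _ _).trans hTF) ?_ h
      intro t' ht' s hs hst
      have h' := Finset.mem_of_mem_erase ht'
      refine Finset.mem_erase.2 ⟨?_, hlow t' h' s hs hst⟩
      rintro rfl
      exact absurd (hmax t' h') (not_le.2 hst)

/-! ### Chains of good bundles -/

/-- The level `τ` lies between `v⁻` and `v⁺` of the bundle `{a+1, …, b}` of agent `k`. -/
def Good (V : ℕ → Finset ℕ → ℤ) (τ : ℤ) (k a b : ℕ) : Prop :=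
  a ≤ b ∧ vminus (V k) (Finset.Icc (a + 1) b) ≤ τ ∧ τ ≤ vplus (V k) (Finset.Icc (a + 1) b)

/-- The items `a+1, …, m` can be split among the agents `k-1, …, 0`, in this order from left to
right, so that every bundle is good; `r j` is the left end of the block of the `j` rightmost
agents. -/
def Chain (V : ℕ → Finset ℕ → ℤ) (τ : ℤ) (m k a : ℕ) : Prop :=
  ∃ r : ℕ → ℕ, r k = a ∧ r 0 = m ∧ ∀ j < k, Good V τ j (r (j + 1)) (r j)

lemma Chain.cons {V : ℕ → Finset ℕ → ℤ} {τ : ℤ} {m k a b : ℕ} (h : Good V τ k a b)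
    (hc : Chain V τ m k b) : Chain V τ m (k + 1) a := by
  obtain ⟨r, h1, h2, h3⟩ := hc
  refine ⟨fun j => if j = k + 1 then a else r j, by simp, by simpa using h2, fun j hj => ?_⟩
  rcases Nat.lt_succ_iff_lt_or_eq.1 hj with hj' | rfl
  · simpa [show j ≠ k by omega, show j ≠ k + 1 by omega] using h3 j hj'
  · simpa [h1] using h

lemma erase_min'_Icc {s t : ℕ} (h : (Finset.Icc s t).Nonempty) :
    (Finset.Icc s t).erase ((Finset.Icc s t).min' h) = Finset.Icc (s + 1) t := by
  have hst := Finset.nonempty_Icc.1 h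
  have : (Finset.Icc s t).min' h = s :=
    le_antisymm (Finset.min'_le _ _ (by simp [hst]))
      (Finset.le_min' _ _ _ fun y hy => (Finset.mem_Icc.1 hy).1)
  rw [this]; ext x; simp only [Finset.mem_erase, Finset.mem_Icc]; omega

lemma erase_max'_Icc {s t : ℕ} (hs : 0 < s) (h : (Finset.Icc s t).Nonempty) :
    (Finset.Icc s t).erase ((Finset.Icc s t).max' h) = Finset.Icc s (t - 1) := by
  have hst := Finset.nonempty_Icc.1 h
  have : (Finset.Icc s t).max' h = t :=
    le_antisymm (Finset.max'_le _ _ _ fun y hy => (Finset.mem_Icc.1 hy).2)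
      (Finset.le_max' _ _ (by simp [hst]))
  rw [this]; ext x; simp only [Finset.mem_erase, Finset.mem_Icc]; omega

lemma good_iff {V : ℕ → Finset ℕ → ℤ} {τ : ℤ} {k a b : ℕ} (hab : a < b) :
    Good V τ k a b ↔
      (val V (k, a, b) ≤ τ ∨ val V (k, a + 1, b) ≤ τ ∨ val V (k, a, b - 1) ≤ τ) ∧
      (τ ≤ val V (k, a, b) ∨ τ ≤ val V (k, a + 1, b) ∨ τ ≤ val V (k, a, b - 1)) := by
  have hne : (Finset.Icc (a + 1) b).Nonempty := Finset.nonempty_Icc.2 hab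
  simp only [Good, vminus, vplus, dif_pos hne, erase_min'_Icc, erase_max'_Icc (Nat.succ_pos a),
    val, min_le_iff, le_max_iff, hab.le, true_and]

/-- `T` separates the bundles with values at most `τ` from those with values at least `τ`. -/
def Sep (V : ℕ → Finset ℕ → ℤ) (τ : ℤ) (n m : ℕ) (T : Finset (ℕ × ℕ × ℕ)) : Prop :=
  ∀ k < n, ∀ a, ∀ b ≤ m,
    ((k, a, b) ∈ T → a < b ∧ val V (k, a, b) ≤ τ) ∧ ((k, a, b) ∉ T → τ ≤ val V (k, a, b))

section

variable {V : ℕ → Finset ℕ → ℤ} {τ : ℤ} {n m : ℕ} {T : Finset (ℕ × ℕ × ℕ)}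

lemma Sep.good_left (hS : Sep V τ n m T) {k a b : ℕ} (hk : k < n) (hb : b ≤ m)
    (h : chi T k a b ≠ chi T k (a + 1) b) : Good V τ k a b := by
  have h1 := hS k hk a b hb
  have h2 := hS k hk (a + 1) b hb
  unfold chi at h
  have hab : a < b := by
    by_contra hab
    have e1 : (k, a, b) ∉ T := fun h => hab (h1.1 h).1
    have e2 : (k, a + 1, b) ∉ T := fun h => hab (by have := (h2.1 h).1; omega)
    simp [e1, e2] at h
  rw [good_iff hab]
  by_cases e1 : (k, a, b) ∈ T <;> by_cases e2 : (k, a + 1, b) ∈ T <;> simp [e1, e2] at h h1 h2 <;>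
    tauto

lemma Sep.good_right (hS : Sep V τ n m T) {k a b : ℕ} (hk : k < n) (hb : b ≤ m)
    (h : chi T k a b ≠ chi T k a (b - 1)) : Good V τ k a b := by
  have h1 := hS k hk a b hb
  have h2 := hS k hk a (b - 1) (by omega)
  unfold chi at h
  have hab : a < b := by
    by_contra hab
    have e1 : (k, a, b) ∉ T := fun h => hab (h1.1 h).1
    have e2 : (k, a, b - 1) ∉ T := fun h => hab (by have := (h2.1 h).1; omega)
    simp [e1, e2] at h
  rw [good_iff hab]
  by_cases e1 : (k, a, b) ∈ T <;> by_cases e2 : (k, a, b - 1) ∈ T <;> simp [e1, e2] at h h1 h2 <;>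
    tauto

lemma chain_of_row_ne_zero (hS : Sep V τ n m T) (k : ℕ) (hk : k ≤ n) (a : ℕ)
    (h : row m T k a ≠ 0) : Chain V τ m k a := by
  induction k generalizing a with
  | zero =>
    have : a = m := by by_contra ha; simp [row, ha] at h
    exact ⟨fun _ => a, rfl, this, by simp⟩
  | succ k ih =>
    obtain ⟨b, hb, hb0⟩ := Finset.exists_ne_zero_of_sum_ne_zero h
    simp only [Finset.mem_range] at hb
    exact Chain.cons
      (hS.good_left hk (by omega) (sub_ne_zero.1 (left_ne_zero_of_mul hb0)))
      (ih (by omega) b (right_ne_zero_of_mul hb0))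

lemma Sep.chi_eq_zero (hS : Sep V τ n m T) {k a b : ℕ} (hk : k < n) (hb : b ≤ m) (hab : b ≤ a) :
    chi T k a b = 0 :=
  if_neg fun h => absurd ((hS k hk a b hb).1 h).1 (not_lt.2 hab)

lemma Sep.cnt_last (hS : Sep V τ n m T) {k : ℕ} (hk : k < n) : cnt m T k (m + 1) = 0 := by
  refine Finset.sum_eq_zero fun b hb => ?_
  simp only [Finset.mem_range] at hb
  rw [hS.chi_eq_zero hk (by omega) (by omega), zero_mul]

/-- The product rule for `χ_k D χ_{k-1} ⋯ D χ_0 e_m`: the change caused by the removal of `t` is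
carried either by the factor `χ_k`, or by the remaining factors. -/
lemma chain_of_diff_ne_zero {t : ℕ × ℕ × ℕ} (hS : Sep V τ n m T) (hS' : Sep V τ n m (T.erase t))
    (hv : val V t = τ) (k : ℕ) (hk : k < n) (a : ℕ)
    (h : cnt m T k a - cnt m (T.erase t) k a ≠ 0) : Chain V τ m (k + 1) a := by
  induction k generalizing a with
  | zero =>
    have e : cnt m T 0 a - cnt m (T.erase t) 0 a =
        ∑ b ∈ Finset.range (m + 1), (chi T 0 a b - chi (T.erase t) 0 a b) * row m T 0 b := by
      simp only [cnt, row, sub_mul, Finset.sum_sub_distrib]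
    rw [e] at h
    exact of_chi hS hv hk h
  | succ k ih =>
    have e : cnt m T (k + 1) a - cnt m (T.erase t) (k + 1) a =
        ∑ b ∈ Finset.range (m + 1),
          (chi T (k + 1) a b - chi (T.erase t) (k + 1) a b) * row m T (k + 1) b +
        ∑ b ∈ Finset.range (m + 1), chi (T.erase t) (k + 1) a b *
          ((cnt m T k b - cnt m (T.erase t) k b) -
            (cnt m T k (b + 1) - cnt m (T.erase t) k (b + 1))) := by
      rw [cnt, cnt, ← Finset.sum_sub_distrib, ← Finset.sum_add_distrib]
      refine Finset.sum_congr rfl fun b _ => ?_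
      rw [row_succ, row_succ]; ring
    rw [e] at h
    by_cases h1 : ∑ b ∈ Finset.range (m + 1),
          (chi T (k + 1) a b - chi (T.erase t) (k + 1) a b) * row m T (k + 1) b = 0
    · rw [h1, zero_add, sum_by_parts (fun b => chi (T.erase t) (k + 1) a b)
        (fun b => cnt m T k b - cnt m (T.erase t) k b)
        (hS'.chi_eq_zero hk (Nat.zero_le _) (Nat.zero_le _)) (m + 1)
        (by simp only [hS.cnt_last (Nat.lt_of_succ_lt hk), hS'.cnt_last (Nat.lt_of_succ_lt hk),
              sub_self])] at h
      obtain ⟨b, hb, hb0⟩ := Finset.exists_ne_zero_of_sum_ne_zero h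
      simp only [Finset.mem_range] at hb
      exact Chain.cons
        (hS'.good_right hk (by omega) (sub_ne_zero.1 (left_ne_zero_of_mul hb0)))
        (ih (by omega) b (right_ne_zero_of_mul hb0))
    · exact of_chi hS hv hk h1
where
  /-- Nonvanishing of the part carried by `χ_k` forces `t = (k, a, b)`, a bundle of value `τ`. -/
  of_chi {t : ℕ × ℕ × ℕ} (hS : Sep V τ n m T) (hv : val V t = τ) {k a : ℕ} (hk : k < n)
      (h : ∑ b ∈ Finset.range (m + 1),
        (chi T k a b - chi (T.erase t) k a b) * row m T k b ≠ 0) : Chain V τ m (k + 1) a := by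
    obtain ⟨b, hb, hb0⟩ := Finset.exists_ne_zero_of_sum_ne_zero h
    simp only [Finset.mem_range] at hb
    have hne := sub_ne_zero.1 (left_ne_zero_of_mul hb0)
    have htb : (k, a, b) = t := by
      by_contra hc
      simp [chi, Finset.mem_erase, hc] at hne
    have hT : (k, a, b) ∈ T := by
      by_contra hc
      simp [chi, Finset.mem_erase, hc] at hne
    refine Chain.cons ?_ (chain_of_row_ne_zero hS k hk.le b (right_ne_zero_of_mul hb0))
    rw [good_iff ((hS k hk a b (by omega)).1 hT).1, htb, hv]
    simp

end

/-! ### Assembling the allocation -/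

lemma cover (r : ℕ → ℕ) (k x : ℕ) (h1 : r k < x) (h2 : x ≤ r 0) :
    ∃ j < k, r (j + 1) < x ∧ x ≤ r j := by
  induction k with
  | zero => omega
  | succ k ih =>
    by_cases h : x ≤ r k
    · exact ⟨k, by omega, h1, h⟩
    · obtain ⟨j, hj, hj'⟩ := ih (by omega)
      exact ⟨j, by omega, hj'⟩

/-- The case of fewer items than agents: bundles with at most one item. -/
lemma few_items (n m : ℕ) (v : Fin n → Finset ℕ → ℤ) (hmn : m < n)
    (hv0 : ∀ i, v i ∅ = 0) :
    ∃ A : Fin n → Finset ℕ,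
      IsAllocation m A ∧ (∀ i, IsConnectedBundle (A i)) ∧
      ∀ i j : Fin n, vminus (v j) (A j) ≤ vplus (v i) (A i) := by
  refine ⟨fun i => if i.1 < m then {i.1 + 1} else ∅, ⟨?_, ?_⟩, ?_, ?_⟩
  · intro i j hij
    have : i.1 ≠ j.1 := fun h => hij (Fin.ext h)
    dsimp only
    split_ifs <;> simp [this]
  · ext x
    simp only [Finset.mem_biUnion, Finset.mem_univ, true_and, Finset.mem_Icc]
    constructor
    · rintro ⟨i, hi⟩
      split_ifs at hi with h
      · simp only [Finset.mem_singleton] at hi; omega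
      · simp at hi
    · rintro ⟨h1, h2⟩
      refine ⟨⟨x - 1, by omega⟩, ?_⟩
      simp only [if_pos (show x - 1 < m by omega), Finset.mem_singleton]
      omega
  · intro i
    dsimp only
    split_ifs
    · exact ⟨i.1 + 1, i.1 + 1, by simp⟩
    · exact ⟨1, 0, by simp⟩
  · intro i j
    have h1 : vminus (v j) (if j.1 < m then {j.1 + 1} else ∅) ≤ 0 := by
      unfold vminus
      split_ifs <;> simp [hv0] at *
    have h2 : 0 ≤ vplus (v i) (if i.1 < m then {i.1 + 1} else ∅) := by
      unfold vplus
      split_ifs <;> simp [hv0] at *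
    exact h1.trans h2

end EQ1P

open EQ1P in
/-- For every instance with non-positive valuations there is a connected
allocation that is `EQ1P_g^c`: `v_i⁺(A_i) ≥ v_j⁻(A_j)` for all `i, j`. -/
theorem eq1pgc_exists_nonpos (n m : ℕ) (hn : 0 < n) (v : Fin n → Finset ℕ → ℤ)
    (hv0 : ∀ i, v i ∅ = 0)
    (hnonpos : ∀ i : Fin n, ∀ S ⊆ Finset.Icc 1 m, v i S ≤ 0) :
    ∃ A : Fin n → Finset ℕ,
      IsAllocation m A ∧ (∀ i, IsConnectedBundle (A i)) ∧
      ∀ i j : Fin n, vminus (v j) (A j) ≤ vplus (v i) (A i) := by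
  rcases lt_or_ge m n with hmn | hmn
  · exact few_items n m v hmn hv0
  obtain ⟨N, rfl⟩ : ∃ N, n = N + 1 := ⟨n - 1, by omega⟩
  let V : ℕ → Finset ℕ → ℤ := fun k => if h : k < N + 1 then v ⟨k, h⟩ else 0
  have hV : ∀ i : Fin (N + 1), V i.1 = v i := fun i => dif_pos i.2
  obtain ⟨T, hTF, t, ht, hmax, hlow, hcnt⟩ :=
    exists_critical m V (full (N + 1) m) N (full (N + 1) m) subset_rfl
      (fun _ _ _ hs _ => hs) (by rw [cnt_full N m hmn]; exact one_ne_zero)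
  have hτ : val V t ≤ 0 := by
    obtain ⟨k, a, b⟩ := t
    obtain ⟨hk, -, hb⟩ := mem_full.1 (hTF ht)
    have := hnonpos ⟨k, hk⟩ (Finset.Icc (a + 1) b) (Finset.Icc_subset_Icc (by omega) hb)
    rwa [← hV] at this
  -- Triples not yet inserted have value at least `τ`: degenerate ones because `τ ≤ 0 = v ∅`.
  have hout : ∀ k < N + 1, ∀ a, ∀ b ≤ m, (k, a, b) ∉ T → val V t ≤ val V (k, a, b) := by
    intro k hk a b hb h
    by_cases hab : a < b
    · by_contra hc
      exact h (hlow _ (mem_full.2 ⟨hk, hab, hb⟩) (not_le.1 hc))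
    · have : Finset.Icc (a + 1) b = ∅ := Finset.Icc_eq_empty (by omega)
      simp only [val, this, hV ⟨k, hk⟩, hv0]
      exact hτ
  have hS : Sep V (val V t) (N + 1) m T := fun k hk a b hb =>
    ⟨fun h => ⟨(mem_full.1 (hTF h)).2.1, hmax _ h⟩, hout k hk a b hb⟩
  have hS' : Sep V (val V t) (N + 1) m (T.erase t) := by
    intro k hk a b hb
    refine ⟨fun h => (hS k hk a b hb).1 (Finset.mem_of_mem_erase h), fun h => ?_⟩
    by_cases hc : (k, a, b) = t
    · rw [hc]
    · exact hout k hk a b hb fun hT => h (Finset.mem_erase.2 ⟨hc, hT⟩)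
  obtain ⟨r, hr1, hr0, hr⟩ :=
    chain_of_diff_ne_zero hS hS' rfl N (Nat.lt_succ_self N) 0 (sub_ne_zero.2 hcnt)
  have hanti : ∀ d j, j + d ≤ N + 1 → r (j + d) ≤ r j := by
    intro d
    induction d with
    | zero => intro j _; simp
    | succ d ih => intro j hj; exact (hr (j + d) (by omega)).1.trans (ih j (by omega))
  have hanti' : ∀ i j, i ≤ j → j ≤ N + 1 → r j ≤ r i := by
    intro i j hij hj
    have := hanti (j - i) i (by omega)
    rwa [show i + (j - i) = j by omega] at this
  refine ⟨fun i => Finset.Icc (r (i.1 + 1) + 1) (r i.1), ⟨?_, ?_⟩, fun i => ⟨_, _, rfl⟩, ?_⟩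
  · intro i j hij
    rw [Finset.disjoint_left]
    intro x hx hy
    simp only [Finset.mem_Icc] at hx hy
    have : i.1 ≠ j.1 := fun h => hij (Fin.ext h)
    rcases lt_or_gt_of_ne this with h | h
    · have := hanti' (i.1 + 1) j.1 h j.2.le; omega
    · have := hanti' (j.1 + 1) i.1 h i.2.le; omega
  · ext x
    simp only [Finset.mem_biUnion, Finset.mem_univ, true_and, Finset.mem_Icc]
    constructor
    · rintro ⟨i, hi⟩
      have := hanti' 0 i.1 (Nat.zero_le _) i.2.le
      omega
    · rintro ⟨h1, h2⟩
      obtain ⟨j, hj, hj'⟩ := cover r (N + 1) x (by omega) (by omega)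
      exact ⟨⟨j, hj⟩, by dsimp only; omega⟩
  · intro i j
    have h1 := (hr j.1 j.2).2.1
    have h2 := (hr i.1 i.2).2.2
    rw [hV] at h1 h2
    exact h1.trans h2
end

section
/- For every fair-division instance with monotone non-increasing valuations there exists a connected allocation A = (A_1,…,A_n) that is EQ1 under path constraints (EQ1P), i.e., v_i^+(A_i) ≥ v_j(A_j) holds for all agents i, j (each agent i, by removing at most one endpoint item from her own bundle A_i, obtains value at least that of every other agent's bundle). -/
/-- An item `x` is a chore: removing it from any bundle containing it never
decreases any agent's value. -/
def IsChore (m : ℕ) {n : ℕ} (v : Fin n → Finset ℕ → ℤ) (x : ℕ) : Prop :=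
  ∀ i : Fin n, ∀ S ⊆ Finset.Icc 1 m, x ∈ S → v i S ≤ v i (S.erase x)

/-- The bundle of agent `i` when the path is cut after the items `p 0 ≤ p 1 ≤ ⋯ ≤ p n`. -/
def piece (p : ℕ → ℕ) (i : ℕ) : Finset ℕ := Finset.Icc (p i + 1) (p (i + 1))

/-- `p` is a nondecreasing sequence of cut points from `0` to `m`; the values `p j` with `j > n`
are irrelevant. -/
def IsCut (n m : ℕ) (p : ℕ → ℕ) : Prop :=
  p 0 = 0 ∧ p n = m ∧ ∀ i < n, p i ≤ p (i + 1)

/-- `p` is a sequence of cuts under which every agent has cost at least `T`. -/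
def Feasible (n m : ℕ) (v : Fin n → Finset ℕ → ℤ) (T : ℕ) (p : ℕ → ℕ) : Prop :=
  IsCut n m p ∧ ∀ i : Fin n, v i (piece p i) ≤ -(T : ℤ)

/-- The agents whose cost under `p` exceeds `T`. -/
def above {n : ℕ} (v : Fin n → Finset ℕ → ℤ) (T : ℕ) (p : ℕ → ℕ) : Finset (Fin n) :=
  Finset.univ.filter fun i => v i (piece p i) < -(T : ℤ)

/-- The sum of the cut points up to `k` and of the distances to `m` of the later ones. It drops
when an item passes to a neighbour closer to agent `k`, since a cut then moves outwards. -/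
def potential (n m k : ℕ) (p : ℕ → ℕ) : ℕ :=
  ∑ j ∈ Finset.range (n + 1), if j ≤ k then p j else m - p j

lemma exists_min_nat {α : Type*} (P : α → Prop) (f : α → ℕ) (h : ∃ x, P x) :
    ∃ x, P x ∧ ∀ y, P y → f x ≤ f y := by
  classical
  have h' : ∃ k, ∃ x, P x ∧ f x = k := by
    obtain ⟨x, hx⟩ := h
    exact ⟨_, x, hx, rfl⟩
  obtain ⟨x, hx, hf⟩ := Nat.find_spec h'
  exact ⟨x, hx, fun y hy => hf ▸ Nat.find_min' h' ⟨y, hy, rfl⟩⟩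

lemma value_anti {n m : ℕ} {v : Fin n → Finset ℕ → ℤ}
    (hc : ∀ x ∈ Finset.Icc 1 m, IsChore m v x) (i : Fin n) {S U : Finset ℕ}
    (hSU : S ⊆ U) (hU : U ⊆ Finset.Icc 1 m) : v i U ≤ v i S := by
  induction U using Finset.strongInduction with
  | H U ih =>
    by_cases h : S = U
    · rw [h]
    · obtain ⟨x, hxU, hxS⟩ := Finset.exists_of_ssubset (hSU.ssubset_of_ne h)
      have h1 := hc x (hU hxU) i U hU hxU
      have h2 := ih (U.erase x) (Finset.erase_ssubset hxU)
        (fun y hy => Finset.mem_erase.2 ⟨fun e => hxS (e ▸ hy), hSU hy⟩)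
        ((Finset.erase_subset _ _).trans hU)
      exact h1.trans h2

lemma IsCut.mono {n m : ℕ} {p : ℕ → ℕ} (h : IsCut n m p) {a b : ℕ} (hab : a ≤ b) (hb : b ≤ n) :
    p a ≤ p b := by
  induction b, hab using Nat.le_induction with
  | base => exact le_rfl
  | succ b _ ih => exact (ih (by omega)).trans (h.2.2 b (by omega))

lemma IsCut.piece_subset {n m : ℕ} {p : ℕ → ℕ} (h : IsCut n m p) (i : Fin n) :
    piece p i ⊆ Finset.Icc 1 m := by
  intro x hx
  have h1 := h.mono (a := i + 1) (b := n) (by omega) le_rfl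
  have h2 := h.2.1
  simp only [piece, Finset.mem_Icc] at hx ⊢
  omega

lemma IsCut.isAllocation {n m : ℕ} {p : ℕ → ℕ} (h : IsCut n m p) :
    IsAllocation m fun i : Fin n => piece p i := by
  constructor
  · have key : ∀ i j : Fin n, i < j → Disjoint (piece p i) (piece p j) := by
      intro i j hij
      have h1 := h.mono (a := i + 1) (b := j) hij j.2.le
      rw [Finset.disjoint_left]
      intro x hx hy
      simp only [piece, Finset.mem_Icc] at hx hy
      omega
    intro i j hij
    rcases lt_or_gt_of_ne hij with h' | h'
    · exact key i j h'
    · exact (key j i h').symm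
  · apply Finset.Subset.antisymm
    · exact Finset.biUnion_subset.2 fun i _ => h.piece_subset i
    · intro x hx
      rw [Finset.mem_Icc] at hx
      -- The owner of `x` is found from the first cut point that is at least `x`.
      have hex : ∃ j, x ≤ p j := ⟨n, by rw [h.2.1]; exact hx.2⟩
      have hle : Nat.find hex ≤ n := Nat.find_min' hex (by rw [h.2.1]; exact hx.2)
      have hsp := Nat.find_spec hex
      obtain ⟨j, hj⟩ : ∃ j, Nat.find hex = j + 1 := by
        apply Nat.exists_eq_succ_of_ne_zero
        intro h0
        rw [h0, h.1] at hsp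
        omega
      have hlt := Nat.find_min hex (m := j) (by omega)
      rw [hj] at hsp hle
      exact Finset.mem_biUnion.2 ⟨⟨j, hle⟩, Finset.mem_univ _,
        Finset.mem_Icc.2 ⟨by simp only; omega, hsp⟩⟩

/-- If `v⁺` of a piece is below `-T ≤ 0`, the piece is nonempty and still has value below `-T`
after the removal of either endpoint. -/
lemma rich_piece {v : Finset ℕ → ℤ} {p : ℕ → ℕ} {i T : ℕ} (h : vplus v (piece p i) < -(T : ℤ)) :
    p i < p (i + 1) ∧ v (Finset.Icc (p i + 1) (p (i + 1) - 1)) < -(T : ℤ) ∧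
      v (Finset.Icc (p i + 1 + 1) (p (i + 1))) < -(T : ℤ) := by
  unfold vplus at h
  split_ifs at h with hne
  · have hlt : p i < p (i + 1) := by
      rw [piece, Finset.nonempty_Icc] at hne
      omega
    have hmin : (piece p i).min' hne = p i + 1 := by
      apply le_antisymm
      · exact Finset.min'_le _ _ (Finset.mem_Icc.2 ⟨le_rfl, hlt⟩)
      · exact (Finset.mem_Icc.1 (Finset.min'_mem _ hne)).1
    have hmax : (piece p i).max' hne = p (i + 1) := by
      apply le_antisymm
      · exact (Finset.mem_Icc.1 (Finset.max'_mem _ hne)).2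
      · exact Finset.le_max' _ _ (Finset.mem_Icc.2 ⟨hlt, le_rfl⟩)
    rw [hmin, hmax] at h
    have e1 : (piece p i).erase (p i + 1) = Finset.Icc (p i + 1 + 1) (p (i + 1)) := by
      ext x
      simp only [piece, Finset.mem_erase, Finset.mem_Icc]
      omega
    have e2 : (piece p i).erase (p (i + 1)) = Finset.Icc (p i + 1) (p (i + 1) - 1) := by
      ext x
      simp only [piece, Finset.mem_erase, Finset.mem_Icc]
      omega
    rw [e1, e2, max_lt_iff, max_lt_iff] at h
    exact ⟨hlt, h.2.2, h.2.1⟩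
  · omega

/-- A rich agent `i ≠ k` can hand an endpoint item over to her neighbour on the side of `k`:
the potential drops, her own value stays below `-T`, and no other bundle shrinks. -/
lemma handover {n m : ℕ} {v : Fin n → Finset ℕ → ℤ} {T : ℕ} {p : ℕ → ℕ} (hp : IsCut n m p)
    {i k : Fin n} (hik : i ≠ k) (h : vplus (v i) (piece p i) < -(T : ℤ)) :
    ∃ q, IsCut n m q ∧ potential n m k q < potential n m k p ∧
      v i (piece q i) < -(T : ℤ) ∧ ∀ j : Fin n, j ≠ i → piece p j ⊆ piece q j := by
  obtain ⟨hlt, hR, hL⟩ := rich_piece h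
  have hin := i.2
  have hkn := k.2
  obtain ⟨p0, pn, pm⟩ := id hp
  rcases lt_or_gt_of_ne (Fin.val_ne_of_ne hik) with hlt' | hlt'
  · refine ⟨Function.update p (i + 1) (p (i + 1) - 1), ⟨?_, ?_, ?_⟩, ?_, ?_, ?_⟩
    · rw [Function.update_of_ne (by omega), p0]
    · rw [Function.update_of_ne (by omega), pn]
    · intro j hj
      have := pm j hj
      simp only [Function.update_apply]
      split_ifs with h1 h2 h2
      · omega
      · subst h1; omega
      · obtain rfl : j = i := by omega
        omega
      · exact this
    · apply Finset.sum_lt_sum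
      · intro j _
        simp only [Function.update_apply]
        split_ifs <;> first | omega | (subst_vars; omega)
      · refine ⟨i + 1, Finset.mem_range.2 (by omega), ?_⟩
        rw [if_pos (by omega), if_pos (by omega), Function.update_self]
        omega
    · simpa [piece] using hR
    · intro j hj
      have hj' := Fin.val_ne_of_ne hj
      unfold piece
      rw [Function.update_of_ne (a := (j : ℕ) + 1) (by omega)]
      apply Finset.Icc_subset_Icc_left
      simp only [Function.update_apply]
      split_ifs with h1
      · rw [h1]; omega
      · exact le_rfl
  · have hpm := hp.mono (a := i + 1) (b := n) (by omega) le_rfl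
    refine ⟨Function.update p i (p i + 1), ⟨?_, ?_, ?_⟩, ?_, ?_, ?_⟩
    · rw [Function.update_of_ne (by omega), p0]
    · rw [Function.update_of_ne (by omega), pn]
    · intro j hj
      have := pm j hj
      simp only [Function.update_apply]
      split_ifs with h1 h2 h2
      · omega
      · rw [h1]; omega
      · rw [h2] at this; omega
      · exact this
    · apply Finset.sum_lt_sum
      · intro j _
        simp only [Function.update_apply]
        split_ifs <;> first | omega | (subst_vars; omega)
      · refine ⟨i, Finset.mem_range.2 (by omega), ?_⟩
        rw [if_neg (by omega), if_neg (by omega), Function.update_self]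
        omega
    · simpa [piece] using hL
    · intro j hj
      have hj' := Fin.val_ne_of_ne hj
      unfold piece
      rw [Function.update_of_ne (a := (j : ℕ)) (by omega)]
      apply Finset.Icc_subset_Icc_right
      simp only [Function.update_apply]
      split_ifs with h1
      · rw [h1]; omega
      · exact le_rfl

/-- For a nonnegative integer `T` that is the largest feasible one, some cuts give every agent
cost at least `T`, and cost at most `T` after the removal of the better endpoint. -/
lemma exists_balanced {n m : ℕ} {v : Fin n → Finset ℕ → ℤ}
    (hc : ∀ x ∈ Finset.Icc 1 m, IsChore m v x) {T : ℕ} (hT : ∃ p, Feasible n m v T p)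
    (hT' : ¬ ∃ p, Feasible n m v (T + 1) p) :
    ∃ p, Feasible n m v T p ∧ ∀ i : Fin n, -(T : ℤ) ≤ vplus (v i) (piece p i) := by
  obtain ⟨p₀, hp₀, hmax⟩ := exists_min_nat (Feasible n m v T)
    (fun p => n - (above v T p).card) hT
  obtain ⟨k, hk⟩ : ∃ k, k ∉ above v T p₀ := by
    by_contra! hall
    refine hT' ⟨p₀, hp₀.1, fun i => ?_⟩
    have := (Finset.mem_filter.1 (hall i)).2
    push_cast
    omega
  obtain ⟨p, ⟨hp, hps⟩, hmin⟩ := exists_min_nat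
    (fun p => Feasible n m v T p ∧ above v T p = above v T p₀) (potential n m k) ⟨p₀, hp₀, rfl⟩
  refine ⟨p, hp, fun i => ?_⟩
  by_contra! hi
  have hvi : v i (piece p i) < -(T : ℤ) := by
    have hle : v i (piece p i) ≤ vplus (v i) (piece p i) := by
      unfold vplus
      split_ifs with hne
      · exact le_max_left _ _
      · exact absurd (Finset.nonempty_Icc.2 (rich_piece hi).1) hne
    exact hle.trans_lt hi
  have hik : i ≠ k := by
    rintro rfl
    rw [← hps] at hk
    exact hk (Finset.mem_filter.2 ⟨Finset.mem_univ _, hvi⟩)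
  obtain ⟨q, hq, hpot, hqi, hsub⟩ := handover hp.1 hik hi
  have hle : ∀ j, j ≠ i → v j (piece q j) ≤ v j (piece p j) := fun j hj =>
    value_anti hc j (hsub j hj) (hq.piece_subset j)
  have hqF : Feasible n m v T q := by
    refine ⟨hq, fun j => ?_⟩
    by_cases hj : j = i
    · rw [hj]; exact hqi.le
    · exact (hle j hj).trans (hp.2 j)
  have hss : above v T p ⊆ above v T q := by
    intro j hj
    refine Finset.mem_filter.2 ⟨Finset.mem_univ _, ?_⟩
    by_cases hj' : j = i
    · rw [hj']; exact hqi
    · exact (hle j hj').trans_lt (Finset.mem_filter.1 hj).2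
  have heq : above v T p = above v T q := by
    apply Finset.eq_of_subset_of_card_le hss
    have h1 := hmax q hqF
    have h2 : (above v T q).card ≤ n := (Finset.card_le_univ _).trans_eq (Fintype.card_fin n)
    rw [hps]
    omega
  have := hmin q ⟨hqF, heq ▸ hps⟩
  omega

/-- For every instance with monotone non-increasing valuations (every item is a
chore) there is a connected allocation that is `EQ1P`:
`v_i⁺(A_i) ≥ v_j(A_j)` for all agents `i, j`. -/
theorem eq1p_exists_nonincreasing (n m : ℕ) (hn : 0 < n)
    (v : Fin n → Finset ℕ → ℤ) (hv0 : ∀ i, v i ∅ = 0)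
    (hchores : ∀ x ∈ Finset.Icc 1 m, IsChore m v x) :
    ∃ A : Fin n → Finset ℕ,
      IsAllocation m A ∧ (∀ i, IsConnectedBundle (A i)) ∧
      ∀ i j : Fin n, v j (A j) ≤ vplus (v i) (A i) := by
  classical
  have hz : ∃ p, Feasible n m v 0 p := by
    have hcut : IsCut n m fun j => if j = 0 then 0 else m :=
      ⟨by simp, by simp [hn.ne'], fun i _ => by by_cases h : i = 0 <;> simp [h]⟩
    refine ⟨_, hcut, fun i => ?_⟩
    have := value_anti hchores i (Finset.empty_subset _) (hcut.piece_subset i)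
    rw [hv0] at this
    simpa using this
  have hbig : ∃ T : ℕ, ¬ ∃ p, Feasible n m v T p := by
    -- No agent can have cost above the one she assigns to the whole path.
    refine ⟨(-v ⟨0, hn⟩ (Finset.Icc 1 m)).toNat + 1, ?_⟩
    rintro ⟨p, hp, hF⟩
    have h1 := hF ⟨0, hn⟩
    have h2 := value_anti hchores ⟨0, hn⟩ (hp.piece_subset ⟨0, hn⟩) (Finset.Subset.refl _)
    dsimp only at h1 h2
    push_cast at h1
    omega
  obtain ⟨T, hT⟩ : ∃ T, Nat.find hbig = T + 1 := by
    apply Nat.exists_eq_succ_of_ne_zero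
    intro h0
    exact (h0 ▸ Nat.find_spec hbig) hz
  obtain ⟨p, hp, hplus⟩ := exists_balanced hchores
    (not_not.1 (Nat.find_min hbig (m := T) (by omega))) (hT ▸ Nat.find_spec hbig)
  exact ⟨fun i => piece p i, hp.1.isAllocation, fun i => ⟨_, _, rfl⟩,
    fun i j => (hp.2 j).trans (hplus i)⟩
end
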